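/- Let (Q, Σ) be a DFA and let c be a natural number. Suppose there exists a word u over Σ such that |Qu| ≤ |Q| − c. Then for every subset R ⊆ Q with |R| ≤ |Q| − c + 1 there exists a word w over Σ with |w| ≤ c(c+1)/2 and |Rw| ≤ |Q| − c. -/

import Mathlib

/-- The image of a finite set of states `R` under a word (list of letters),
where each letter `s` acts on states via `act s`. -/
def wordImage {Q A : Type*} [DecidableEq Q] (act : A → Q → Q) (R : Finset Q) :
    List A → Finset Q
  | [] => R
  | s :: w => wordImage act (R.image (act s)) w

/-!
Let `w` be a shortest word that is not injective on `R`, say `p ≠ q` in `R` have the same image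
under `w`. Let `Aᵢ` be the pair of images of `p`, `q` under the prefix of length `i`, and `Bᵢ` the
complement of the image of `R` under it. Then `Aᵢ` and `Bᵢ` are disjoint, but `Aⱼ` meets `Bᵢ` for
`i < j`: otherwise the letters between positions `i` and `j` could be cut out of `w`. Since all
proper prefixes are injective on `R`, every `Bᵢ` has as many elements as the complement of `R`, so
the skew Bollobás theorem bounds the number of indices, which is the length of `w`.

For the skew Bollobás theorem, identify points with distinct nonzero elements of a domain. A set `A`
becomes the polynomial `∏ x ∈ A, (T - x)`, a set `B` the form `P ↦ ∏ r ∈ B, P(r)` in the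
coefficients of `P`. The latter vanishes at the former exactly when `A` meets `B`, so the forms are
linearly independent, and there are at most as many as the dimension of the space of forms.
-/

section LinearAlgebra

theorem linearIndependent_of_dual_triangular {ι R M : Type*} [LinearOrder ι] [CommRing R]
    [NoZeroDivisors R] [AddCommGroup M] [Module R M] {v : ι → M} {f : ι → Module.Dual R M}
    (hdiag : ∀ i, f i (v i) ≠ 0) (hlt : ∀ ⦃i j⦄, i < j → f j (v i) = 0) :
    LinearIndependent R v := by
  rw [linearIndependent_iff]
  intro l hl
  by_contra hne
  have hsupp : l.support.Nonempty := Finsupp.support_nonempty_iff.2 hne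
  set m := l.support.max' hsupp
  have hm : m ∈ l.support := l.support.max'_mem hsupp
  have hbelow : ∀ i ∈ l.support, i ≠ m → l i • f m (v i) = 0 := fun i hi him ↦ by
    rw [hlt (lt_of_le_of_ne (l.support.le_max' i hi) him), smul_zero]
  have hcomb : l m • f m (v m) = 0 := by
    rw [← Finset.sum_eq_single_of_mem m hm hbelow]
    simpa [Finsupp.linearCombination_apply, Finsupp.sum] using congrArg (f m) hl
  exact mul_ne_zero (Finsupp.mem_support_iff.1 hm) (hdiag m) hcomb

theorem finrank_homogeneousSubmodule {σ R : Type*} [Fintype σ] [CommRing R] [Nontrivial R]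
    (n : ℕ) :
    Module.finrank R (MvPolynomial.homogeneousSubmodule σ R n) =
      (Fintype.card σ + n - 1).choose n := by
  classical
  rw [MvPolynomial.homogeneousSubmodule_eq_finsupp_supported]
  have hset : {d : σ →₀ ℕ | d.degree = n} = (Finset.univ : Finset σ).finsuppAntidiag n := by
    ext d
    simp [Finsupp.degree_eq_sum]
  refine (Module.finrank_eq_nat_card_basis (MvPolynomial.basisRestrictSupport R _)).trans ?_
  rw [hset, Nat.card_coe_set_eq, Set.ncard_coe_finset, Finset.card_finsuppAntidiag_nat_eq_choose,
    Finset.card_univ]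

theorem card_le_choose_of_linearIndependent_of_isHomogeneous {ι σ R : Type*} [Fintype ι]
    [Fintype σ] [CommRing R] [Nontrivial R] {f : ι → MvPolynomial σ R} {n : ℕ}
    (hind : LinearIndependent R f) (hf : ∀ i, (f i).IsHomogeneous n) :
    Fintype.card ι ≤ (Fintype.card σ + n - 1).choose n := by
  let V := MvPolynomial.homogeneousSubmodule σ R n
  have : Module.Finite R V :=
    Module.Finite.iff_fg.2 (MvPolynomial.homogeneousSubmodule_fg σ R n)
  have hindV : LinearIndependent R fun i ↦ (⟨f i, hf i⟩ : V) := .of_comp V.subtype hind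
  exact hindV.fintype_card_le_finrank.trans_eq (finrank_homogeneousSubmodule n)

end LinearAlgebra

section SkewBollobas

variable {R : Type*} [CommRing R]

/-- The linear form sending the coefficients `(c₀, …, cₙ₋₁)` of a polynomial of degree less than
`n` to its value `∑ k, cₖ y ^ k` at `y`. -/
noncomputable def evalForm (n : ℕ) (y : R) : MvPolynomial (Fin n) R :=
  ∑ k : Fin n, MvPolynomial.C (y ^ (k : ℕ)) * MvPolynomial.X k

theorem isHomogeneous_evalForm (n : ℕ) (y : R) : (evalForm n y).IsHomogeneous 1 :=
  .sum _ _ _ fun k _ ↦ MvPolynomial.isHomogeneous_C_mul_X _ k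

theorem eval_coeff_evalForm {n : ℕ} {P : Polynomial R} (hP : P.natDegree < n) (y : R) :
    MvPolynomial.eval (fun k : Fin n ↦ P.coeff k) (evalForm n y) = P.eval y := by
  rw [Polynomial.eval_eq_sum_range' hP, ← Fin.sum_univ_eq_sum_range (fun k ↦ P.coeff k * y ^ k)]
  simp [evalForm, mul_comm]

variable {Q : Type*}

/-- The form of degree `b`, for `#B ≤ b`, sending the coefficients of a polynomial `P` of degree
less than `n` to the product of its values at the points `e r`, `r ∈ B`. The factor `P(0)` pads the
degree to `b`; this is harmless when `P` has no root at `0`. -/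
noncomputable def evalProdForm (n b : ℕ) (e : Q → R) (B : Finset Q) : MvPolynomial (Fin n) R :=
  evalForm n 0 ^ (b - B.card) * ∏ r ∈ B, evalForm n (e r)

theorem isHomogeneous_evalProdForm (n : ℕ) {b : ℕ} (e : Q → R) {B : Finset Q} (hB : B.card ≤ b) :
    (evalProdForm n b e B).IsHomogeneous b := by
  have hpad := (isHomogeneous_evalForm n (0 : R)).pow (b - B.card)
  have hprod := MvPolynomial.IsHomogeneous.prod B (fun r ↦ evalForm n (e r)) (fun _ ↦ 1)
    fun r _ ↦ isHomogeneous_evalForm n (e r)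
  simpa [evalProdForm, hB] using hpad.mul hprod

theorem eval_coeff_evalProdForm_eq_zero_iff [IsDomain R] {n : ℕ} (b : ℕ) {e : Q → R}
    (he : Function.Injective e) (he₀ : ∀ x, e x ≠ 0) {A : Finset Q} (hA : A.card < n)
    (B : Finset Q) :
    MvPolynomial.eval (fun k : Fin n ↦ (∏ x ∈ A, (Polynomial.X - Polynomial.C (e x))).coeff k)
      (evalProdForm n b e B) = 0 ↔ ¬ Disjoint A B := by
  have hdeg : (∏ x ∈ A, (Polynomial.X - Polynomial.C (e x))).natDegree < n := by
    rwa [Polynomial.natDegree_finsetProd_X_sub_C_eq_card]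
  have hpad : (∏ x ∈ A, (Polynomial.X - Polynomial.C (e x))).eval 0 ≠ 0 := by
    simp [Polynomial.eval_prod, Finset.prod_eq_zero_iff, he₀]
  simp only [evalProdForm, map_mul, map_pow, map_prod, eval_coeff_evalForm hdeg, mul_eq_zero,
    pow_ne_zero _ hpad, false_or]
  simp [Polynomial.eval_prod, Finset.prod_eq_zero_iff, sub_eq_zero, he.eq_iff,
    Finset.not_disjoint_iff, and_comm]

theorem linearIndependent_evalProdForm [IsDomain R] {ι : Type*} [LinearOrder ι] {n : ℕ} (b : ℕ)
    {e : Q → R} (he : Function.Injective e) (he₀ : ∀ x, e x ≠ 0) {A B : ι → Finset Q}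
    (hA : ∀ i, (A i).card < n) (hdisj : ∀ i, Disjoint (A i) (B i))
    (hmeet : ∀ ⦃i j⦄, i < j → ¬ Disjoint (A j) (B i)) :
    LinearIndependent R fun i ↦ evalProdForm n b e (B i) := by
  let coeffs (j : ι) (k : Fin n) : R := (∏ x ∈ A j, (Polynomial.X - Polynomial.C (e x))).coeff k
  have eval_eq_zero_iff (i j : ι) :
      MvPolynomial.aeval (coeffs j) (evalProdForm n b e (B i)) = 0 ↔ ¬ Disjoint (A j) (B i) := by
    rw [MvPolynomial.aeval_eq_eval]
    exact eval_coeff_evalProdForm_eq_zero_iff b he he₀ (hA j) (B i)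
  exact linearIndependent_of_dual_triangular
    (f := fun j ↦ (MvPolynomial.aeval (coeffs j)).toLinearMap)
    (fun i ↦ (eval_eq_zero_iff i i).not.2 (not_not.2 (hdisj i)))
    (fun i j hij ↦ (eval_eq_zero_iff i j).2 (hmeet hij))

theorem card_le_choose_of_skew_disjoint {ι : Type*} [Fintype ι] [LinearOrder ι] {a b : ℕ}
    {A B : ι → Finset Q} (hA : ∀ i, (A i).card ≤ a) (hB : ∀ i, (B i).card ≤ b)
    (hdisj : ∀ i, Disjoint (A i) (B i)) (hmeet : ∀ ⦃i j⦄, i < j → ¬ Disjoint (A j) (B i)) :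
    Fintype.card ι ≤ (a + b).choose a := by
  have hind := linearIndependent_evalProdForm b (MvPolynomial.X_injective (R := ℤ))
    MvPolynomial.X_ne_zero (fun i ↦ Nat.lt_succ_of_le (hA i)) hdisj hmeet
  calc Fintype.card ι ≤ (Fintype.card (Fin (a + 1)) + b - 1).choose b :=
        card_le_choose_of_linearIndependent_of_isHomogeneous hind
          fun i ↦ isHomogeneous_evalProdForm _ _ (hB i)
    _ = (a + b).choose a := by
      rw [Fintype.card_fin, Nat.add_right_comm, Nat.add_sub_cancel, Nat.choose_symm_add]

end SkewBollobas

section Automata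

variable {Q A : Type*} (act : A → Q → Q)

/-- The action `q ↦ qw` of a word `w` on states, letters being read from left to right. -/
def wordMap (w : List A) (q : Q) : Q :=
  w.foldl (fun q s ↦ act s q) q

theorem wordMap_append (u v : List A) : wordMap act (u ++ v) = wordMap act v ∘ wordMap act u :=
  funext fun _ ↦ List.foldl_append

variable [DecidableEq Q]

theorem wordImage_eq_image (R : Finset Q) (w : List A) :
    wordImage act R w = R.image (wordMap act w) := by
  induction w generalizing R with
  | nil => exact Finset.image_id.symm
  | cons s w ih => exact (ih _).trans Finset.image_image

theorem wordImage_mono (w : List A) : Monotone fun R : Finset Q ↦ wordImage act R w := by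
  simpa only [wordImage_eq_image] using Finset.image_mono (wordMap act w)

theorem card_wordImage_lt_iff {R : Finset Q} {w : List A} :
    (wordImage act R w).card < R.card ↔ ¬ Set.InjOn (wordMap act w) R := by
  rw [wordImage_eq_image, ← Finset.card_image_iff, Finset.card_image_le.lt_iff_ne]

variable {act} [Fintype Q]

theorem length_le_choose_of_forall_shorter_injOn {R : Finset Q} {w : List A}
    (hw : ¬ Set.InjOn (wordMap act w) R)
    (hmin : ∀ v : List A, v.length < w.length → Set.InjOn (wordMap act v) R) :
    w.length ≤ (Rᶜ.card + 2).choose 2 := by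
  obtain ⟨p, hp, q, hq, hpq, hne⟩ :
      ∃ p ∈ R, ∃ q ∈ R, wordMap act w p = wordMap act w q ∧ p ≠ q := by
    simpa [Set.InjOn] using hw
  let pre (i : Fin w.length) : Q → Q := wordMap act (w.take i)
  have pre_injOn (i : Fin w.length) : Set.InjOn (pre i) R := hmin _ (by simp)
  have pair_subset_image (i : Fin w.length) : {pre i p, pre i q} ⊆ R.image (pre i) := by
    simp [Finset.insert_subset_iff, Finset.mem_image_of_mem _ hp, Finset.mem_image_of_mem _ hq]
  have pair_not_subset_image ⦃i j : Fin w.length⦄ (hij : i < j) :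
      ¬ {pre j p, pre j q} ⊆ R.image (pre i) := by
    intro hsub
    have shortcut_injOn : Set.InjOn (wordMap act (w.take i ++ w.drop j)) R :=
      hmin _ (by simp; omega)
    have suffix_injOn : Set.InjOn (wordMap act (w.drop j)) (R.image (pre i)) := by
      rw [wordMap_append] at shortcut_injOn
      simpa only [Finset.coe_image] using shortcut_injOn.image_of_comp
    have suffix_eq : wordMap act (w.drop j) (pre j p) = wordMap act (w.drop j) (pre j q) := by
      simpa only [← Function.comp_apply (f := wordMap act (w.drop j)), pre, ← wordMap_append,
        List.take_append_drop] using hpq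
    exact hne <| pre_injOn j hp hq <|
      suffix_injOn (hsub (by simp)) (hsub (by simp)) suffix_eq
  have hbound := card_le_choose_of_skew_disjoint (a := 2) (b := Rᶜ.card)
    (A := fun i ↦ {pre i p, pre i q}) (B := fun i ↦ (R.image (pre i))ᶜ)
    (fun _ ↦ Finset.card_le_two)
    (fun i ↦ by rw [Finset.card_compl, Finset.card_compl, Finset.card_image_of_injOn (pre_injOn i)])
    (fun i ↦ disjoint_compl_right_iff.2 (pair_subset_image i))
    (fun i j hij ↦ disjoint_compl_right_iff.not.2 (pair_not_subset_image hij))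
  rwa [Fintype.card_fin, Nat.add_comm] at hbound

theorem exists_length_le_choose_card_wordImage_lt {R : Finset Q}
    (h : ∃ u : List A, (wordImage act R u).card < R.card) :
    ∃ w : List A, w.length ≤ (Rᶜ.card + 2).choose 2 ∧ (wordImage act R w).card < R.card := by
  obtain ⟨w, hw, hmin⟩ := exists_minimalFor_of_wellFoundedLT _ List.length h
  refine ⟨w, length_le_choose_of_forall_shorter_injOn ((card_wordImage_lt_iff act).1 hw) ?_, hw⟩
  intro v hv
  by_contra hinj
  exact hv.not_ge (hmin ((card_wordImage_lt_iff act).2 hinj) hv.le)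

end Automata

theorem stmt_3 {Q A : Type*} [Fintype Q] [DecidableEq Q] (act : A → Q → Q)
    (c : ℕ)
    (h : ∃ u : List A, (wordImage act Finset.univ u).card ≤ Fintype.card Q - c)
    (R : Finset Q) (hR : R.card ≤ Fintype.card Q - c + 1) :
    ∃ w : List A, w.length ≤ c * (c + 1) / 2 ∧
      (wordImage act R w).card ≤ Fintype.card Q - c := by
  obtain hsmall | hlarge := le_or_gt R.card (Fintype.card Q - c)
  · exact ⟨[], Nat.zero_le _, hsmall⟩
  obtain ⟨u, hu⟩ := h
  have hRu : (wordImage act R u).card < R.card :=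
    ((Finset.card_le_card (wordImage_mono act u R.subset_univ)).trans hu).trans_lt hlarge
  obtain ⟨w, hlength, hw⟩ := exists_length_le_choose_card_wordImage_lt ⟨u, hRu⟩
  refine ⟨w, ?_, by omega⟩
  have hcompl : Rᶜ.card + 2 ≤ c + 1 := by
    have := R.card_le_univ
    rw [Finset.card_compl]
    omega
  calc w.length ≤ (Rᶜ.card + 2).choose 2 := hlength
    _ ≤ (c + 1).choose 2 := Nat.choose_le_choose 2 hcompl
    _ = c * (c + 1) / 2 := by rw [Nat.choose_two_right, Nat.add_sub_cancel, Nat.mul_comm]
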